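/- arXiv:2009.09488 — 2 statements merged into one kernel-verified Lean document; each statement's English description precedes it below -/
import Mathlib

section
/- Let K be a positive semiring, let R be a K-relation over a finite set X of attributes and S a K-relation over a finite set Y of attributes. If R[X ∩ Y] ≡ S[X ∩ Y], then the join commutes up to equivalence: R ⋈ S ≡ S ⋈ R. -/
open Finsupp

variable {A : Type*} [DecidableEq A]

/-- An `X`-tuple: a function assigning to each attribute `a ∈ X` an element of its domain. -/
def Tup (dom : A → Type*) (X : Finset A) : Type _ := ∀ a ∈ X, dom a

/-- Projection (restriction) of an `X`-tuple to `Y ⊆ X`. -/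
def restr (dom : A → Type*) {X Y : Finset A} (h : Y ⊆ X) (t : Tup dom X) : Tup dom Y :=
  fun a ha => t a (h ha)

/-- The marginal `R[Y]` of a `K`-relation `R` over `X`, for `Y ⊆ X`. -/
noncomputable def marg {dom : A → Type*} {K : Type*} [AddCommMonoid K] {X Y : Finset A}
    (h : Y ⊆ X) (R : Tup dom X →₀ K) : Tup dom Y →₀ K :=
  Finsupp.mapDomain (restr dom h) R

/-- Equivalence up to normalization of two `K`-relations over the same attribute set. -/
def KEquiv {dom : A → Type*} {K : Type*} [MulZeroClass K] {X : Finset A}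
    (R S : Tup dom X →₀ K) : Prop :=
  ∃ a b : K, a ≠ 0 ∧ b ≠ 0 ∧ ∀ t, a * R t = b * S t

/-- Merge an `X`-tuple and a `Y`-tuple into an `X ∪ Y`-tuple (values from the first argument
on `X`). -/
def merge {dom : A → Type*} {X Y : Finset A} (r : Tup dom X) (s : Tup dom Y) :
    Tup dom (X ∪ Y) :=
  fun a ha => if h : a ∈ X then r a h else s a ((Finset.mem_union.mp ha).resolve_left h)

/-- The correcting factor `c_S(u) = ∏_{v ∈ S[Z]', v ≠ u} S[Z](v)`. -/
noncomputable def cFactor {dom : A → Type*} {K : Type*} [CommSemiring K] {Y Z : Finset A}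
    (h : Z ⊆ Y) (S : Tup dom Y →₀ K) (u : Tup dom Z) : K :=
  haveI := Classical.decEq (Tup dom Z)
  ∏ v ∈ (marg h S).support.erase u, (marg h S) v

/-- The join of a `K`-relation over `X` and a `K`-relation over `Y`:
`(R ⋈ S)(t) = R(t[X])·S(t[Y])·c_S(t[X ∩ Y])`. -/
noncomputable def kjoin {dom : A → Type*} {K : Type*} [CommSemiring K] {X Y : Finset A}
    (R : Tup dom X →₀ K) (S : Tup dom Y →₀ K) : Tup dom (X ∪ Y) →₀ K :=
  haveI := Classical.decEq (Tup dom (X ∪ Y))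
  Finsupp.onFinset ((R.support ×ˢ S.support).image fun p => merge p.1 p.2)
    (fun t => R (restr dom Finset.subset_union_left t) *
      S (restr dom Finset.subset_union_right t) *
      cFactor Finset.inter_subset_right S (restr dom Finset.inter_subset_union t))
    (by
      intro t ht
      have hR : R (restr dom Finset.subset_union_left t) ≠ 0 :=
        left_ne_zero_of_mul (left_ne_zero_of_mul ht)
      have hS : S (restr dom Finset.subset_union_right t) ≠ 0 :=
        right_ne_zero_of_mul (left_ne_zero_of_mul ht)
      refine Finset.mem_image.mpr ⟨(restr dom Finset.subset_union_left t,
        restr dom Finset.subset_union_right t),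
        Finset.mem_product.mpr ⟨Finsupp.mem_support_iff.mpr hR, Finsupp.mem_support_iff.mpr hS⟩,
        ?_⟩
      funext a ha
      by_cases h : a ∈ X <;> simp [merge, restr, h])

/-- Two `K`-relations (over possibly different attribute sets) are consistent if a single
`K`-relation over the union has marginals equivalent to each of them. -/
def Consistent {dom : A → Type*} {K : Type*} [CommSemiring K] {X Y : Finset A}
    (R : Tup dom X →₀ K) (S : Tup dom Y →₀ K) : Prop :=
  ∃ T : Tup dom (X ∪ Y) →₀ K,
    KEquiv (marg Finset.subset_union_left T) R ∧ KEquiv (marg Finset.subset_union_right T) S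

/-!
Suppose `a · R[Z] = b · S[Z]` with `Z = X ∩ Y` and `a, b ≠ 0`. Then `R[Z]` and `S[Z]` have the same
support. If it is empty, positivity forces `R = 0` and both joins vanish. Otherwise let it have
`n + 1` elements. For `u` in it, `c_R(u)` and `c_S(u)` are products over the same `n` tuples, so
`a ^ n · c_R(u) = b ^ n · c_S(u)`, where the exponent does not depend on `u`. At a tuple `t` with
`R(t[X]) ≠ 0`, positivity puts `t[Z]` in the common support, whence
`b ^ n · (R ⋈ S)(t) = a ^ n · (S ⋈ R)(t)`; at all other tuples both joins vanish.
-/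

theorem subsingleton_addUnits_of_add_eq_zero {M : Type*} [AddMonoid M]
    (h : ∀ a b : M, a + b = 0 → a = 0) : Subsingleton (AddUnits M) :=
  subsingleton_of_forall_eq 0 fun u => AddUnits.ext (h _ _ u.add_neg)

theorem support_eq_of_mul_eq_mul {ι M : Type*} [MulZeroClass M] [NoZeroDivisors M]
    {f g : ι →₀ M} {a b : M} (ha : a ≠ 0) (hb : b ≠ 0) (h : ∀ i, a * f i = b * g i) :
    f.support = g.support := by
  ext i
  rw [Finsupp.mem_support_iff, Finsupp.mem_support_iff, ← mul_ne_zero_iff_left ha, h i,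
    mul_ne_zero_iff_left hb]

section Relations

variable {α : Type*} {dom : α → Type*} {K : Type*} {X Y Z : Finset α}

theorem marg_restr_ne_zero [AddCommMonoid K] [Subsingleton (AddUnits K)] (h : Y ⊆ X)
    {R : Tup dom X →₀ K} {t : Tup dom X} (ht : R t ≠ 0) : marg h R (restr dom h t) ≠ 0 := by
  classical
  rw [← Finsupp.mem_support_iff, marg, Finsupp.mapDomain_support_of_subsingletonAddUnits]
  exact Finset.mem_image_of_mem _ (Finsupp.mem_support_iff.mpr ht)

theorem marg_apply_of_subset [AddCommMonoid K] (hYX : Y ⊆ X) (hXY : X ⊆ Y)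
    (R : Tup dom X →₀ K) (t : Tup dom Y) : marg hYX R t = R (restr dom hXY t) :=
  have restr_injective : Function.Injective (restr dom hYX) :=
    Function.LeftInverse.injective (g := restr dom hXY) fun _ => rfl
  Finsupp.mapDomain_apply restr_injective R (restr dom hXY t)

variable [CommSemiring K]

theorem cFactor_restr_of_eq {Z' : Finset α} (hZ : Z' = Z) (h : Z ⊆ X) (R : Tup dom X →₀ K)
    (u : Tup dom Z) : cFactor (hZ.le.trans h) R (restr dom hZ.le u) = cFactor h R u := by
  subst hZ
  rfl

theorem pow_mul_cFactor_eq_pow_mul_cFactor [NoZeroDivisors K] (hX : Z ⊆ X) (hY : Z ⊆ Y)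
    {R : Tup dom X →₀ K} {S : Tup dom Y →₀ K} {a b : K} (ha : a ≠ 0) (hb : b ≠ 0)
    (h : ∀ u, a * marg hX R u = b * marg hY S u) {u : Tup dom Z} (hu : marg hX R u ≠ 0) :
    a ^ ((marg hX R).support.card - 1) * cFactor hX R u =
      b ^ ((marg hX R).support.card - 1) * cFactor hY S u := by
  let := Classical.decEq (Tup dom Z)
  have support_eq : (marg hX R).support = (marg hY S).support := support_eq_of_mul_eq_mul ha hb h
  rw [← Finset.card_erase_of_mem (Finsupp.mem_support_iff.mpr hu), cFactor, cFactor, ← support_eq,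
    Finset.pow_card_mul_prod, Finset.pow_card_mul_prod]
  exact Finset.prod_congr rfl fun v _ => h v

variable [DecidableEq α]

theorem kjoin_apply (R : Tup dom X →₀ K) (S : Tup dom Y →₀ K) (t : Tup dom (X ∪ Y)) :
    kjoin R S t = R (restr dom Finset.subset_union_left t) *
      S (restr dom Finset.subset_union_right t) *
      cFactor Finset.inter_subset_right S (restr dom Finset.inter_subset_union t) :=
  rfl

theorem marg_kjoin_swap_apply (R : Tup dom X →₀ K) (S : Tup dom Y →₀ K) (t : Tup dom (X ∪ Y)) :
    marg (Finset.union_comm X Y).le (kjoin S R) t =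
      S (restr dom Finset.subset_union_right t) * R (restr dom Finset.subset_union_left t) *
      cFactor Finset.inter_subset_left R (restr dom Finset.inter_subset_union t) := by
  rw [marg_apply_of_subset _ (Finset.union_comm Y X).le, kjoin_apply,
    ← cFactor_restr_of_eq (Finset.inter_comm Y X) Finset.inter_subset_left]
  rfl

theorem pow_mul_kjoin_eq_pow_mul_kjoin_swap [NoZeroDivisors K] [Subsingleton (AddUnits K)]
    {R : Tup dom X →₀ K} {S : Tup dom Y →₀ K} {a b : K} (ha : a ≠ 0) (hb : b ≠ 0)
    (h : ∀ u, a * marg (Finset.inter_subset_left : X ∩ Y ⊆ X) R u =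
      b * marg (Finset.inter_subset_right : X ∩ Y ⊆ Y) S u) (t : Tup dom (X ∪ Y)) :
    b ^ ((marg (Finset.inter_subset_left : X ∩ Y ⊆ X) R).support.card - 1) * kjoin R S t =
      a ^ ((marg (Finset.inter_subset_left : X ∩ Y ⊆ X) R).support.card - 1) *
        marg (Finset.union_comm X Y).le (kjoin S R) t := by
  rw [kjoin_apply, marg_kjoin_swap_apply]
  set n := (marg (Finset.inter_subset_left : X ∩ Y ⊆ X) R).support.card - 1
  set r := R (restr dom Finset.subset_union_left t)
  set s := S (restr dom Finset.subset_union_right t)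
  set u : Tup dom (X ∩ Y) := restr dom Finset.inter_subset_union t
  by_cases hr : r = 0
  · simp [hr]
  have hu : marg Finset.inter_subset_left R u ≠ 0 := marg_restr_ne_zero _ hr
  have scaling : a ^ n * cFactor Finset.inter_subset_left R u =
      b ^ n * cFactor Finset.inter_subset_right S u :=
    pow_mul_cFactor_eq_pow_mul_cFactor _ _ ha hb h hu
  calc b ^ n * (r * s * cFactor Finset.inter_subset_right S u)
      = r * s * (b ^ n * cFactor Finset.inter_subset_right S u) := mul_left_comm ..
    _ = r * s * (a ^ n * cFactor Finset.inter_subset_left R u) := by rw [scaling]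
    _ = a ^ n * (s * r * cFactor Finset.inter_subset_left R u) := by ring

end Relations

/-- If two K-relations have equivalent marginals on their common attributes, then their join
commutes up to equivalence (after the canonical identification of  with ). -/
theorem statement5 {A : Type*} [DecidableEq A] (dom : A → Type*) (K : Type*)
    [CommSemiring K] [Nontrivial K] [NoZeroDivisors K]
    (hplus : ∀ a b : K, a + b = 0 → a = 0 ∧ b = 0)
    (X Y : Finset A) (R : Tup dom X →₀ K) (S : Tup dom Y →₀ K)
    (h : KEquiv (marg (Finset.inter_subset_left : X ∩ Y ⊆ X) R)
      (marg (Finset.inter_subset_right : X ∩ Y ⊆ Y) S)) :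
    KEquiv (kjoin R S) (marg ((Finset.union_comm X Y).le) (kjoin S R)) := by
  have : Subsingleton (AddUnits K) :=
    subsingleton_addUnits_of_add_eq_zero fun a b hab => (hplus a b hab).1
  obtain ⟨a, b, ha, hb, hab⟩ := h
  exact ⟨b ^ _, a ^ _, pow_ne_zero _ hb, pow_ne_zero _ ha,
    pow_mul_kjoin_eq_pow_mul_kjoin_swap ha hb hab⟩
end

section
/- Let K be a positive semiring, let U be a finite set of attributes, let X and Y be subsets of U with X ∪ Y = U, and let P be a K-relation over U. If the support P' of P satisfies the functional dependency X ∩ Y → X ∖ Y or P' satisfies the functional dependency X ∩ Y → Y ∖ X, then the decomposition of P along X and Y is lossless-join, i.e., P ≡ P[X] ⋈ P[Y]. -/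
open Finsupp

variable {A : Type*} [DecidableEq A]

/-- Two tuples over `U` agree on all attributes in `V`. -/
def agreeOn {A : Type*} [DecidableEq A] {dom : A → Type*} {U : Finset A} (V : Finset A)
    (t₁ t₂ : Tup dom U) : Prop :=
  ∀ a (ha : a ∈ U), a ∈ V → t₁ a ha = t₂ a ha

/-- An ordinary relation (a set of `U`-tuples) satisfies the functional dependency `V → W`
if any two of its tuples that agree on `V` also agree on `W`. -/
def SatisfiesFD {A : Type*} [DecidableEq A] {dom : A → Type*} {U : Finset A}
    (P : Finset (Tup dom U)) (V W : Finset A) : Prop :=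
  ∀ t₁ ∈ P, ∀ t₂ ∈ P, agreeOn V t₁ t₂ → agreeOn W t₁ t₂

/-
Put `Z = X ∩ Y` and assume `Z → X`. On a tuple `t` of the support, this gives
`P[X](t[X]) = P[Z](t[Z])` and makes `Y` a key, so that `P[Y](t[Y]) = P(t)`; off the support, `t[X]`
and `t[Y]` cannot both lie in the projections of the support (Heath's theorem). Hence
`P[X](t[X]) · P[Y](t[Y]) = P[Z](t[Z]) · P(t)` for every `t`. The correcting factor completes
`P[Z](t[Z])` to the product of all nonzero values of `P[Z]`, which does not depend on `t`.
-/

section Marginal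

variable {ι : Type*} {dom : ι → Type*} {K : Type*} {U V W : Finset ι}

theorem restr_self (t : Tup dom U) : restr dom subset_rfl t = t := rfl

theorem marg_self [AddCommMonoid K] (P : Tup dom U →₀ K) : marg subset_rfl P = P :=
  Finsupp.mapDomain_id

theorem marg_marg [AddCommMonoid K] (hV : V ⊆ U) (hW : W ⊆ V) (P : Tup dom U →₀ K) :
    marg hW (marg hV P) = marg (hW.trans hV) P :=
  Finsupp.mapDomain_comp.symm

theorem exists_mem_support_of_marg_ne_zero [AddCommMonoid K] (h : V ⊆ U) {P : Tup dom U →₀ K}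
    {u : Tup dom V} (hu : marg h P u ≠ 0) : ∃ r ∈ P.support, restr dom h r = u := by
  classical
  exact Finset.mem_image.mp (Finsupp.mapDomain_support (Finsupp.mem_support_iff.mpr hu))

theorem restr_mem_support_marg [AddCommMonoid K] [Subsingleton (AddUnits K)] (h : V ⊆ U)
    {P : Tup dom U →₀ K} {t : Tup dom U} (ht : t ∈ P.support) :
    restr dom h t ∈ (marg h P).support := by
  classical
  rw [marg, Finsupp.mapDomain_support_of_subsingletonAddUnits]
  exact Finset.mem_image_of_mem _ ht

theorem marg_mul_cFactor [CommSemiring K] (h : V ⊆ U) (S : Tup dom U →₀ K) {u : Tup dom V}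
    (hu : u ∈ (marg h S).support) :
    marg h S u * cFactor h S u = (marg h S).prod fun _ k => k := by
  classical
  exact Finset.mul_prod_erase _ _ hu

end Marginal

section FunctionalDependency

variable {dom : A → Type*} {U V W X Y Z : Finset A}

theorem restr_eq_restr_iff_agreeOn (h : V ⊆ U) {r t : Tup dom U} :
    restr dom h r = restr dom h t ↔ agreeOn V r t :=
  ⟨fun hrt a _ haV => congrFun₂ hrt a haV, fun hrt => funext₂ fun a haV => hrt a (h haV) haV⟩

theorem agreeOn.mono {r t : Tup dom U} (hrt : agreeOn W r t) (h : V ⊆ W) : agreeOn V r t :=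
  fun a ha haV => hrt a ha (h haV)

theorem agreeOn.union {r t : Tup dom U} (hV : agreeOn V r t) (hW : agreeOn W r t) :
    agreeOn (V ∪ W) r t :=
  fun a ha haVW => (Finset.mem_union.mp haVW).elim (hV a ha) (hW a ha)

namespace SatisfiesFD

variable {P : Finset (Tup dom U)}

theorem mono_left (hfd : SatisfiesFD P V X) (h : V ⊆ W) : SatisfiesFD P W X :=
  fun r hr s hs hrs => hfd r hr s hs (hrs.mono h)

theorem mono_right (hfd : SatisfiesFD P V X) (h : W ⊆ X) : SatisfiesFD P V W :=
  fun r hr s hs hrs => (hfd r hr s hs hrs).mono h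

theorem augment (hfd : SatisfiesFD P V W) : SatisfiesFD P V (W ∪ V) :=
  fun r hr s hs hrs => (hfd r hr s hs hrs).union hrs

theorem of_inter_sdiff (hfd : SatisfiesFD P (X ∩ Y) (X \ Y)) : SatisfiesFD P (X ∩ Y) X := by
  simpa only [Finset.sdiff_union_inter] using hfd.augment

theorem mem_of_agreeOn (hfd : SatisfiesFD P Z X) (hZX : Z ⊆ X) (hZY : Z ⊆ Y) (hU : U ⊆ X ∪ Y)
    {r s t : Tup dom U} (hr : r ∈ P) (hs : s ∈ P) (hrt : agreeOn X r t) (hst : agreeOn Y s t) :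
    t ∈ P := by
  have hrsZ : agreeOn Z r s := fun a ha haZ =>
    (hrt a ha (hZX haZ)).trans (hst a ha (hZY haZ)).symm
  have hrsX : agreeOn X r s := hfd r hr s hs hrsZ
  have hstX : agreeOn X s t := fun a ha haX => (hrsX a ha haX).symm.trans (hrt a ha haX)
  have hst_eq : s = t := funext₂ fun a ha => hstX.union hst a ha (hU ha)
  exact hst_eq ▸ hs

end SatisfiesFD

end FunctionalDependency

section LosslessJoin

variable {dom : A → Type*} {K : Type*} {U V W X Y Z : Finset A}

theorem marg_restr_eq_marg_restr_of_fd [AddCommMonoid K] (hV : V ⊆ U) (hW : W ⊆ U) (hVW : V ⊆ W)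
    {P : Tup dom U →₀ K} (hfd : SatisfiesFD P.support V W) {t : Tup dom U} (ht : t ∈ P.support) :
    marg hV P (restr dom hV t) = marg hW P (restr dom hW t) := by
  classical
  have hiff : ∀ r ∈ P.support,
      (restr dom hV r = restr dom hV t ↔ restr dom hW r = restr dom hW t) := by
    intro r hr
    rw [restr_eq_restr_iff_agreeOn, restr_eq_restr_iff_agreeOn]
    exact ⟨hfd r hr t ht, fun hrt => hrt.mono hVW⟩
  rw [marg, marg, Finsupp.mapDomain_apply_eq_sum, Finsupp.mapDomain_apply_eq_sum,
    Finset.filter_congr hiff]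

theorem marg_mul_marg_of_fd [NonUnitalNonAssocSemiring K] (hX : X ⊆ U) (hY : Y ⊆ U) (hZX : Z ⊆ X)
    (hZY : Z ⊆ Y) (hU : U ⊆ X ∪ Y) {P : Tup dom U →₀ K} (hfd : SatisfiesFD P.support Z X)
    (t : Tup dom U) :
    marg hX P (restr dom hX t) * marg hY P (restr dom hY t) =
      marg (hZX.trans hX) P (restr dom (hZX.trans hX) t) * P t := by
  by_cases ht : t ∈ P.support
  · have hkey : SatisfiesFD P.support Y U := (hfd.mono_left hZY).augment.mono_right hU
    have hmargX := marg_restr_eq_marg_restr_of_fd (hZX.trans hX) hX hZX hfd ht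
    have hmargY := marg_restr_eq_marg_restr_of_fd hY subset_rfl hY hkey ht
    rw [hmargX, hmargY, marg_self, restr_self]
  · rw [Finsupp.notMem_support_iff.mp ht, mul_zero]
    by_contra hne
    obtain ⟨r, hr, hrt⟩ := exists_mem_support_of_marg_ne_zero hX (left_ne_zero_of_mul hne)
    obtain ⟨s, hs, hst⟩ := exists_mem_support_of_marg_ne_zero hY (right_ne_zero_of_mul hne)
    rw [restr_eq_restr_iff_agreeOn] at hrt hst
    exact ht (hfd.mem_of_agreeOn hZX hZY hU hr hs hrt hst)

theorem kjoin_marg_marg_apply_of_fd [CommSemiring K] [Subsingleton (AddUnits K)]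
    {P : Tup dom (X ∪ Y) →₀ K}
    (hfd : SatisfiesFD P.support (X ∩ Y) X ∨ SatisfiesFD P.support (X ∩ Y) Y)
    (t : Tup dom (X ∪ Y)) :
    kjoin (marg Finset.subset_union_left P) (marg Finset.subset_union_right P) t =
      ((marg Finset.inter_subset_union P).prod fun _ k => k) * P t := by
  have hmul : marg Finset.subset_union_left P (restr dom Finset.subset_union_left t) *
      marg Finset.subset_union_right P (restr dom Finset.subset_union_right t) =
      marg Finset.inter_subset_union P (restr dom Finset.inter_subset_union t) * P t := by
    rcases hfd with hfdX | hfdY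
    · exact marg_mul_marg_of_fd _ _ Finset.inter_subset_left Finset.inter_subset_right
        subset_rfl hfdX t
    · rw [mul_comm]
      exact marg_mul_marg_of_fd _ _ Finset.inter_subset_right Finset.inter_subset_left
        (Finset.union_comm X Y).subset hfdY t
  rw [kjoin, Finsupp.onFinset_apply, hmul]
  by_cases ht : t ∈ P.support
  · have hfactor := marg_mul_cFactor Finset.inter_subset_right (marg Finset.subset_union_right P)
      (u := restr dom Finset.inter_subset_union t)
      (by rw [marg_marg]; exact restr_mem_support_marg _ ht)
    rw [marg_marg] at hfactor
    rw [mul_right_comm, hfactor]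
  · rw [Finsupp.notMem_support_iff.mp ht, mul_zero, zero_mul, mul_zero]

end LosslessJoin

/-- Lossless-join decompositions of K-relations: if the support of a K-relation over
`U = X ∪ Y` satisfies one of the two functional dependencies, then the K-relation is
equivalent to the join of its marginals on `X` and on `Y`. -/
theorem statement10 {A : Type*} [DecidableEq A] (dom : A → Type*) (K : Type*)
    [CommSemiring K] [Nontrivial K] [NoZeroDivisors K]
    (hplus : ∀ a b : K, a + b = 0 → a = 0 ∧ b = 0)
    (X Y : Finset A) (P : Tup dom (X ∪ Y) →₀ K)
    (hfd : SatisfiesFD P.support (X ∩ Y) (X \ Y) ∨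
           SatisfiesFD P.support (X ∩ Y) (Y \ X)) :
    KEquiv P (kjoin (marg Finset.subset_union_left P) (marg Finset.subset_union_right P)) := by
  have : Subsingleton (AddUnits K) :=
    subsingleton_of_forall_eq 0 fun u => AddUnits.ext (hplus u ↑(-u) u.add_neg).1
  have hfd' : SatisfiesFD P.support (X ∩ Y) X ∨ SatisfiesFD P.support (X ∩ Y) Y :=
    hfd.imp SatisfiesFD.of_inter_sdiff fun h => by
      rw [Finset.inter_comm] at h ⊢
      exact h.of_inter_sdiff
  refine ⟨(marg Finset.inter_subset_union P).prod fun _ k => k, 1, ?_, one_ne_zero, fun t => ?_⟩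
  · exact Finset.prod_ne_zero_iff.mpr fun v hv => Finsupp.mem_support_iff.mp hv
  · rw [one_mul, kjoin_marg_marg_apply_of_fd hfd' t]
end
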